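/- arXiv:2002.03155 — 2 statements merged into one kernel-verified Lean document; each statement's English description precedes it below -/
import Mathlib

section
/- Fix an integer Δ ≥ 2. For all ε > 0 and δ > 0 there exists p > 0 such that for every probability distribution μ on a finite linearly ordered set D with μ({x}) ≤ p for all x ∈ D, and every finite connected simple graph G = (V,E) with maximum degree at most Δ, the following holds for the randomized greedy algorithm: (1) sample labels (r_v)_{v∈V} i.i.d. from μ; (2) initialize S = {v ∈ V : there exists u ∈ N_2(v) with u ≠ v and r_u = r_v}; (3) while the closed neighborhood N[S] does not cover V, add to S a vertex maximizing the number of newly dominated vertices |N[v] \ N[S]|, breaking ties first by the order of the labels r_v and then by a fixed linear order on V. The output S is a dominating set of G for every realization of the labels, and with probability at least 1 − δ it satisfies |S| ≤ (H(Δ+1)+ε)·γ(G), where H(k) = Σ_{i=1}^{k} 1/i. -/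
/-!
The vertices chosen by the greedy loop are controlled by a potential function. Fix a minimum
dominating set `T`, and for a partial solution `S` put `Φ S = ∑ t ∈ T, H (|N[t] \ N[S]|)`, with
`H` the harmonic numbers. If a greedy step has gain `g`, then every `t ∈ T` has gain `a ≤ g` before
the step and some `b ≤ a` after it, so `H a - H b ≥ (a - b) / a ≥ (a - b) / g`. The sets `N[t]`
cover the `g` newly dominated vertices, so the differences `a - b` sum to at least `g` and `Φ`
drops by at least `1` (`greedy_step_potential`). Hence, whatever the tie-breaking order,
`|S| ≤ |S₀| + Φ S₀ ≤ |S₀| + H (Δ + 1) * γ(G)`, where `S₀` is the initial set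
(`greedy_card_le`).

The set `S₀` is small with high probability: two distinct vertices receive equal labels with
probability `∑ x, μ x ^ 2 ≤ p` (`collision_prob_le`), so `E |S₀| ≤ n (Δ + 1) ^ 2 p`. As
`n ≤ (Δ + 1) γ(G)`, Markov's inequality with `p = ε δ / (Δ + 1) ^ 3` bounds the probability of
`|S₀| > ε γ(G)` by `δ`.
-/

/-- `N_L(v)`: the set of vertices at graph distance at most `L` from `v`
(including `v` itself). -/
def ballSet {V : Type} (G : SimpleGraph V) (v : V) (L : ℕ) : Set V :=
  {u | G.edist v u ≤ (L : ℕ∞)}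

/-- A dominating set of a graph `G`: every vertex either lies in `S` or is adjacent to a
vertex of `S`. -/
def IsDomSet {V : Type} (G : SimpleGraph V) (S : Set V) : Prop :=
  ∀ v : V, v ∈ S ∨ ∃ u ∈ S, G.Adj u v

/-- `γ(G)`: the minimum cardinality of a dominating set of the finite graph `G`. -/
noncomputable def dominationNumber {V : Type} [Fintype V] (G : SimpleGraph V) : ℕ :=
  sInf {n : ℕ | ∃ S : Set V, IsDomSet G S ∧ S.ncard = n}

open Classical in
/-- The probability, when labels `r : V → D` are sampled i.i.d. from the distribution `μ`
on the finite set `D` (joint law the product measure `μ^V`), that the predicate `P`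
holds of the labeling. -/
noncomputable def probOf {V D : Type} [Fintype V] [Fintype D]
    (μ : D → ℝ) (P : (V → D) → Prop) : ℝ :=
  ∑ r ∈ Finset.univ.filter P, ∏ v, μ (r v)

open Classical in
/-- The closed neighborhood `N[S]` of a finite set of vertices, as a `Finset`. -/
noncomputable def closedNbhdF {V : Type} [Fintype V] (G : SimpleGraph V)
    (S : Finset V) : Finset V :=
  S ∪ Finset.univ.filter (fun w => ∃ u ∈ S, G.Adj u w)

open Classical in
/-- The number `|N[v] \ N[S]|` of vertices newly dominated when `v` is added to `S`. -/
noncomputable def greedyGain {V : Type} [Fintype V] (G : SimpleGraph V)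
    (S : Finset V) (v : V) : ℕ :=
  (closedNbhdF G {v} \ closedNbhdF G S).card

/-- The linear order on `V` obtained by comparing first the labels `r v` and then, to
break remaining ties, the fixed linear order on `V` (lexicographic comparison). -/
noncomputable def labelOrder {V D : Type} [LinearOrder V] [LinearOrder D]
    (r : V → D) : LinearOrder V :=
  LinearOrder.lift' (fun v => toLex (r v, v)) (fun a b h => by
    have h2 : (r a, a) = (r b, b) := toLex.injective h
    exact congrArg Prod.snd h2)

open Classical in
/-- One step of the greedy procedure with respect to an explicitly given linear order
`ord` on `V`: if `N[S]` does not yet cover `V`, add the `ord`-least vertex among the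
vertices maximizing the number of newly dominated vertices `|N[v] \ N[S]|`. -/
noncomputable def greedyStepOrd {V : Type} [Fintype V] (G : SimpleGraph V)
    (ord : LinearOrder V) (S : Finset V) : Finset V :=
  if closedNbhdF G S = Finset.univ then S
  else
    let maximizers :=
      Finset.univ.filter (fun v => greedyGain G S v = Finset.univ.sup (greedyGain G S))
    if h : maximizers.Nonempty then insert (@Finset.min' V ord maximizers h) S else S

open Classical in
/-- The randomized greedy algorithm: given labels `r`, initialize
`S = {v | ∃ u ∈ N_2(v), u ≠ v ∧ r u = r v}` and then run the greedy procedure, breaking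
ties first by the labels `r` and then by the fixed linear order on `V`. -/
noncomputable def randomizedGreedy {V D : Type} [Fintype V] [LinearOrder V]
    [LinearOrder D] (G : SimpleGraph V) (r : V → D) : Finset V :=
  (greedyStepOrd G (labelOrder r))^[Fintype.card V]
    (Finset.univ.filter (fun v => ∃ u ∈ ballSet G v 2, u ≠ v ∧ r u = r v))

/-! ### Closed neighborhoods and the greedy procedure -/

section Greedy

variable {V : Type} [Fintype V] (G : SimpleGraph V)

lemma mem_closedNbhdF {S : Finset V} {w : V} :
    w ∈ closedNbhdF G S ↔ w ∈ S ∨ ∃ u ∈ S, G.Adj u w := by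
  simp [closedNbhdF]

lemma closedNbhdF_mono {S T : Finset V} (h : S ⊆ T) : closedNbhdF G S ⊆ closedNbhdF G T := by
  intro w
  simp only [mem_closedNbhdF]
  rintro (hw | ⟨u, hu, ha⟩)
  · exact Or.inl (h hw)
  · exact Or.inr ⟨u, h hu, ha⟩

lemma closedNbhdF_insert [DecidableEq V] (S : Finset V) (v : V) :
    closedNbhdF G (insert v S) = closedNbhdF G {v} ∪ closedNbhdF G S := by
  ext w
  simp only [mem_closedNbhdF, Finset.mem_union, Finset.mem_insert, Finset.mem_singleton,
    exists_eq_or_imp, exists_eq_left]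
  tauto

lemma mem_closedNbhdF_iff_exists {S : Finset V} {w : V} :
    w ∈ closedNbhdF G S ↔ ∃ s ∈ S, w ∈ closedNbhdF G {s} := by
  simp only [mem_closedNbhdF, Finset.mem_singleton, exists_eq_left]
  constructor
  · rintro (h | ⟨u, hu, ha⟩)
    · exact ⟨w, h, Or.inl rfl⟩
    · exact ⟨u, hu, Or.inr ha⟩
  · rintro ⟨s, hs, rfl | ha⟩
    · exact Or.inl hs
    · exact Or.inr ⟨s, hs, ha⟩

lemma card_closedNbhdF_singleton_le {Δ : ℕ} (hd : ∀ w : V, (G.neighborSet w).ncard ≤ Δ) (v : V) :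
    (closedNbhdF G {v}).card ≤ Δ + 1 := by
  classical
  have h : closedNbhdF G {v} = insert v (G.neighborSet v).toFinset := by
    ext w
    simp [mem_closedNbhdF]
  rw [h]
  refine (Finset.card_insert_le _ _).trans ?_
  have := hd v
  rw [Set.ncard_eq_toFinset_card'] at this
  omega

lemma card_closedNbhdF_le {Δ : ℕ} (hd : ∀ w : V, (G.neighborSet w).ncard ≤ Δ) (S : Finset V) :
    (closedNbhdF G S).card ≤ S.card * (Δ + 1) := by
  classical
  have h : closedNbhdF G S = S.biUnion (fun s => closedNbhdF G {s}) := by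
    ext w
    rw [mem_closedNbhdF_iff_exists]
    simp
  rw [h]
  exact Finset.card_biUnion_le_card_mul _ _ _
    (fun s _ => card_closedNbhdF_singleton_le G hd s)

lemma greedyGain_le {Δ : ℕ} (hd : ∀ w : V, (G.neighborSet w).ncard ≤ Δ) (S : Finset V) (v : V) :
    greedyGain G S v ≤ Δ + 1 := by
  classical
  unfold greedyGain
  exact (Finset.card_le_card Finset.sdiff_subset).trans (card_closedNbhdF_singleton_le G hd v)

/-- A nontrivial greedy step inserts a vertex of maximum gain, and that gain is positive. -/
lemma greedyStepOrd_spec (ord : LinearOrder V) (S : Finset V)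
    (hS : closedNbhdF G S ≠ Finset.univ) :
    ∃ v, (∀ u, greedyGain G S u ≤ greedyGain G S v) ∧ 0 < greedyGain G S v ∧
      (greedyStepOrd G ord S).card ≤ S.card + 1 ∧
      closedNbhdF G (greedyStepOrd G ord S) = closedNbhdF G (insert v S) := by
  classical
  obtain ⟨w, hw⟩ : ∃ w, w ∉ closedNbhdF G S := by
    by_contra! h
    exact hS (Finset.eq_univ_iff_forall.2 h)
  have hne : (Finset.univ.filter
      (fun v => greedyGain G S v = Finset.univ.sup (greedyGain G S))).Nonempty := by
    obtain ⟨v, -, hv⟩ := Finset.exists_mem_eq_sup (Finset.univ : Finset V) ⟨w, by simp⟩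
      (greedyGain G S)
    exact ⟨v, by simp [hv]⟩
  have hstep : greedyStepOrd G ord S = insert (@Finset.min' V ord _ hne) S := by
    unfold greedyStepOrd
    rw [if_neg hS]
    simp only
    rw [dif_pos hne]
  have hmem := @Finset.min'_mem V ord _ hne
  set v := @Finset.min' V ord _ hne
  have hmax : greedyGain G S v = Finset.univ.sup (greedyGain G S) := by simpa using hmem
  have hle : ∀ u, greedyGain G S u ≤ greedyGain G S v := fun u => by
    rw [hmax]
    exact Finset.le_sup (f := greedyGain G S) (Finset.mem_univ u)
  refine ⟨v, hle, ?_, ?_, ?_⟩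
  · refine lt_of_lt_of_le ?_ (hle w)
    exact Finset.card_pos.2 ⟨w, by simp [mem_closedNbhdF, hw] ⟩
  · rw [hstep]
    exact Finset.card_insert_le _ _
  · rw [hstep]

/-- After `k` steps either everything is dominated or at least `k` vertices are. -/
lemma greedy_iterate_cover (ord : LinearOrder V) (S : Finset V) (k : ℕ) :
    closedNbhdF G ((greedyStepOrd G ord)^[k] S) = Finset.univ ∨
      k ≤ (closedNbhdF G ((greedyStepOrd G ord)^[k] S)).card := by
  classical
  induction k with
  | zero => right; simp
  | succ k ih =>
    rw [Function.iterate_succ_apply']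
    set T := (greedyStepOrd G ord)^[k] S
    by_cases hT : closedNbhdF G T = Finset.univ
    · left
      simp [greedyStepOrd, hT]
    · right
      obtain ⟨v, -, hpos, -, hv⟩ := greedyStepOrd_spec G ord T hT
      have hk := ih.resolve_left hT
      rw [hv, closedNbhdF_insert, ← Finset.sdiff_union_self_eq_union,
        Finset.card_union_of_disjoint Finset.sdiff_disjoint]
      have : (closedNbhdF G {v} \ closedNbhdF G T).card = greedyGain G T v := by
        unfold greedyGain
        congr!
      omega

lemma greedy_iterate_eq_univ (ord : LinearOrder V) (S : Finset V) :
    closedNbhdF G ((greedyStepOrd G ord)^[Fintype.card V] S) = Finset.univ := by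
  rcases greedy_iterate_cover G ord S (Fintype.card V) with h | h
  · exact h
  · exact Finset.eq_univ_of_card _ (le_antisymm (Finset.card_le_univ _) h)

/-! ### The harmonic potential -/

/-- The `n`-th harmonic number, as a real number. -/
noncomputable def harm (n : ℕ) : ℝ := ∑ i ∈ Finset.range n, (1 : ℝ) / (i + 1)

lemma harm_nonneg (n : ℕ) : 0 ≤ harm n := Finset.sum_nonneg fun i _ => by positivity

lemma harm_mono {m n : ℕ} (h : m ≤ n) : harm m ≤ harm n :=
  Finset.sum_le_sum_of_subset_of_nonneg (Finset.range_mono h) fun i _ _ => by positivity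

/-- Each of the `a - b` terms of `H a - H b` is at least `1 / a`, hence at least `1 / g`. -/
lemma harm_sub_ge {a b g : ℕ} (hba : b ≤ a) (hag : a ≤ g) :
    ((a : ℝ) - b) / g ≤ harm a - harm b := by
  have h : harm a - harm b = ∑ i ∈ Finset.Ico b a, (1 : ℝ) / (i + 1) := by
    rw [Finset.sum_Ico_eq_sub _ hba]
    rfl
  have h2 : ((a : ℝ) - b) / g = ∑ i ∈ Finset.Ico b a, (1 : ℝ) / g := by
    rw [Finset.sum_const, Nat.card_Ico, nsmul_eq_mul, Nat.cast_sub hba]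
    ring
  rw [h, h2]
  refine Finset.sum_le_sum fun i hi => ?_
  rw [Finset.mem_Ico] at hi
  apply one_div_le_one_div_of_le
  · positivity
  · have : i + 1 ≤ g := by omega
    exact_mod_cast this

/-- The harmonic potential of a partial solution `S`, measured against a reference set `T`. -/
noncomputable def greedyPot (T S : Finset V) : ℝ := ∑ t ∈ T, harm (greedyGain G S t)

/-- A greedy step pays for the vertex it adds by a drop of the potential. -/
lemma greedy_step_potential (ord : LinearOrder V) {T : Finset V}
    (hT : closedNbhdF G T = Finset.univ) (S : Finset V) :
    ((greedyStepOrd G ord S).card : ℝ) + greedyPot G T (greedyStepOrd G ord S) ≤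
      S.card + greedyPot G T S := by
  classical
  by_cases hS : closedNbhdF G S = Finset.univ
  · simp [greedyStepOrd, hS]
  obtain ⟨v, hmax, hpos, hcard, hv⟩ := greedyStepOrd_spec G ord S hS
  set S' := greedyStepOrd G ord S
  have hgain : ∀ (R : Finset V) t,
      greedyGain G R t = (closedNbhdF G {t} \ closedNbhdF G R).card := fun R t => by
    unfold greedyGain
    congr!
  have hsub : closedNbhdF G S ⊆ closedNbhdF G S' := by
    rw [hv]
    exact closedNbhdF_mono G (Finset.subset_insert _ _)
  have hba : ∀ t, greedyGain G S' t ≤ greedyGain G S t := fun t => by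
    rw [hgain, hgain]
    exact Finset.card_le_card (Finset.sdiff_subset_sdiff le_rfl hsub)
  -- The newly dominated vertices are covered by what the members of `T` lose.
  have hsum : (greedyGain G S v : ℝ) ≤
      ∑ t ∈ T, ((greedyGain G S t : ℝ) - greedyGain G S' t) := by
    have hnew : closedNbhdF G {v} \ closedNbhdF G S ⊆ T.biUnion (fun t =>
        (closedNbhdF G {t} \ closedNbhdF G S) \ (closedNbhdF G {t} \ closedNbhdF G S')) := by
      intro w hw
      rw [Finset.mem_sdiff] at hw
      have hwT : w ∈ closedNbhdF G T := by simp [hT]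
      obtain ⟨t, ht, hwt⟩ := (mem_closedNbhdF_iff_exists G).1 hwT
      have hwS' : w ∈ closedNbhdF G S' := by
        rw [hv, closedNbhdF_insert]
        exact Finset.mem_union_left _ hw.1
      simp only [Finset.mem_biUnion, Finset.mem_sdiff]
      exact ⟨t, ht, ⟨hwt, hw.2⟩, fun h => h.2 hwS'⟩
    have h1 := (Finset.card_le_card hnew).trans Finset.card_biUnion_le
    rw [← hgain] at h1
    refine (Nat.cast_le.2 h1).trans (le_of_eq ?_)
    rw [Nat.cast_sum]
    refine Finset.sum_congr rfl fun t _ => ?_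
    rw [Finset.card_sdiff_of_subset (Finset.sdiff_subset_sdiff le_rfl hsub), ← hgain, ← hgain,
      Nat.cast_sub (hba t)]
  have hg : (0 : ℝ) < greedyGain G S v := by exact_mod_cast hpos
  have hdrop : 1 ≤ greedyPot G T S - greedyPot G T S' := by
    unfold greedyPot
    rw [← Finset.sum_sub_distrib]
    calc (1 : ℝ) ≤ (∑ t ∈ T, ((greedyGain G S t : ℝ) - greedyGain G S' t)) /
          greedyGain G S v := (one_le_div hg).2 hsum
      _ = ∑ t ∈ T, ((greedyGain G S t : ℝ) - greedyGain G S' t) / greedyGain G S v :=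
          Finset.sum_div _ _ _
      _ ≤ _ := Finset.sum_le_sum fun t _ => harm_sub_ge (hba t) (hmax t)
  have hcard' : (S'.card : ℝ) ≤ S.card + 1 := by exact_mod_cast hcard
  linarith

/-- The greedy algorithm started from `S` adds at most `H (Δ + 1) * |T|` vertices, for any
dominating set `T`. -/
lemma greedy_card_le {Δ : ℕ} (hd : ∀ w : V, (G.neighborSet w).ncard ≤ Δ) (ord : LinearOrder V)
    {T : Finset V} (hT : closedNbhdF G T = Finset.univ) (S : Finset V) (k : ℕ) :
    (((greedyStepOrd G ord)^[k] S).card : ℝ) ≤ S.card + harm (Δ + 1) * T.card := by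
  classical
  have hiter : (((greedyStepOrd G ord)^[k] S).card : ℝ) +
      greedyPot G T ((greedyStepOrd G ord)^[k] S) ≤ S.card + greedyPot G T S := by
    induction k with
    | zero => simp
    | succ k ih =>
      rw [Function.iterate_succ_apply']
      exact (greedy_step_potential G ord hT _).trans ih
  have hnn : 0 ≤ greedyPot G T ((greedyStepOrd G ord)^[k] S) :=
    Finset.sum_nonneg fun _ _ => harm_nonneg _
  have hinit : greedyPot G T S ≤ harm (Δ + 1) * T.card := by
    unfold greedyPot
    rw [mul_comm, ← nsmul_eq_mul]
    refine Finset.sum_le_card_nsmul _ _ _ fun t _ => harm_mono ?_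
    exact greedyGain_le G hd S t
  linarith

/-! ### Domination number and balls of radius two -/

lemma exists_min_domSet :
    ∃ T : Finset V, closedNbhdF G T = Finset.univ ∧ T.card = dominationNumber G := by
  classical
  have hne : {n : ℕ | ∃ S : Set V, IsDomSet G S ∧ S.ncard = n}.Nonempty :=
    ⟨_, Set.univ, fun v => Or.inl trivial, rfl⟩
  obtain ⟨S, hS, hc⟩ := Nat.sInf_mem hne
  refine ⟨S.toFinset, ?_, ?_⟩
  · rw [Finset.eq_univ_iff_forall]
    intro w
    rw [mem_closedNbhdF]
    simpa using hS w
  · rw [← Set.ncard_eq_toFinset_card', hc]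
    rfl

lemma ballSet_two_subset (v u : V) (hu : u ∈ ballSet G v 2) :
    u ∈ closedNbhdF G (closedNbhdF G {v}) := by
  have hle : G.edist v u ≤ (2 : ℕ) := hu
  have hnt : G.edist v u ≠ ⊤ := fun h => by rw [h] at hle; simp at hle
  obtain ⟨w, hw⟩ := SimpleGraph.exists_walk_of_edist_ne_top hnt
  rw [← hw] at hle
  have hlen : w.length ≤ 2 := by exact_mod_cast hle
  clear hw hle hnt hu
  simp only [mem_closedNbhdF, Finset.mem_singleton, exists_eq_left]
  match w, hlen with
  | .nil, _ => exact Or.inl (Or.inl rfl)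
  | .cons h .nil, _ => exact Or.inl (Or.inr h)
  | .cons h (.cons h' .nil), _ => exact Or.inr ⟨_, Or.inr h, h'⟩
  | .cons _ (.cons _ (.cons _ q)), hl => simp at hl

end Greedy

/-! ### Random labels and collisions -/

section Probability

variable {V D : Type} [Fintype V] {μ : D → ℝ}

lemma weight_nonneg (h0 : ∀ x, 0 ≤ μ x) (r : V → D) : 0 ≤ ∏ v, μ (r v) :=
  Finset.prod_nonneg fun _ _ => h0 _

variable [Fintype D]

open Classical in
lemma sum_weight (h1 : ∑ x, μ x = 1) : ∑ r : V → D, ∏ v, μ (r v) = 1 := by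
  classical
  rw [← Fintype.piFinset_univ, ← Finset.prod_univ_sum]
  simp [h1]

open Classical in
lemma probOf_eq_sum_ite (P : (V → D) → Prop) [DecidablePred P] :
    probOf μ P = ∑ r : V → D, (∏ v, μ (r v)) * if P r then 1 else 0 := by
  classical
  unfold probOf
  rw [Finset.sum_filter]
  refine Finset.sum_congr rfl fun r _ => ?_
  by_cases h : P r <;> simp [h]

lemma probOf_mono (h0 : ∀ x, 0 ≤ μ x) {P Q : (V → D) → Prop} (h : ∀ r, P r → Q r) :
    probOf μ P ≤ probOf μ Q := by
  classical
  refine Finset.sum_le_sum_of_subset_of_nonneg ?_ fun r _ _ => weight_nonneg h0 r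
  intro r hr
  simp only [Finset.mem_filter, Finset.mem_univ, true_and] at hr ⊢
  exact h r hr

/-- Two distinct vertices receive the same label with probability `∑ x, μ x ^ 2 ≤ p`. -/
lemma collision_prob_le {p : ℝ} (h0 : ∀ x, 0 ≤ μ x) (h1 : ∑ x, μ x = 1) (hp : ∀ x, μ x ≤ p)
    {u v : V} (huv : u ≠ v) : probOf μ (fun r : V → D => r u = r v) ≤ p := by
  classical
  rw [probOf_eq_sum_ite]
  -- The indicator of `r u = r v = x` is absorbed into the product over the vertices.
  let f : D → V → D → ℝ := fun x w y => if (w = u ∨ w = v) ∧ y ≠ x then 0 else μ y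
  have hf : ∀ r : V → D, (∏ w, μ (r w)) * (if r u = r v then 1 else 0) =
      ∑ x, ∏ w, f x w (r w) := by
    intro r
    have hzero : ∀ x, (r u ≠ x ∨ r v ≠ x) → ∏ w, f x w (r w) = 0 := by
      rintro x (h | h)
      · exact Finset.prod_eq_zero (Finset.mem_univ u) (by simp [f, h])
      · exact Finset.prod_eq_zero (Finset.mem_univ v) (by simp [f, h])
    rw [Finset.sum_eq_single (r u) (fun x _ hx => hzero x (Or.inl hx.symm)) (by simp)]
    by_cases h : r u = r v
    · rw [if_pos h, mul_one]
      refine Finset.prod_congr rfl fun w _ => ?_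
      rw [eq_comm]
      apply if_neg
      rintro ⟨rfl | rfl, hne⟩
      · exact hne rfl
      · exact hne h.symm
    · rw [hzero _ (Or.inr (Ne.symm h)), if_neg h, mul_zero]
  have hx : ∀ x, ∑ r : V → D, ∏ w, f x w (r w) = μ x * μ x := by
    intro x
    rw [← Fintype.piFinset_univ, ← Finset.prod_univ_sum]
    have hw : ∀ w, ∑ y, f x w y = if w ∈ ({u, v} : Finset V) then μ x else 1 := by
      intro w
      by_cases h : w = u ∨ w = v
      · simp [f, h]
      · simp [f, h, h1]
    simp only [hw]
    rw [Finset.prod_ite_mem, Finset.univ_inter, Finset.prod_pair huv]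
  simp only [hf]
  rw [Finset.sum_comm]
  simp only [hx]
  calc ∑ x, μ x * μ x ≤ ∑ x, p * μ x :=
        Finset.sum_le_sum fun x _ => mul_le_mul_of_nonneg_right (hp x) (h0 x)
    _ = p := by rw [← Finset.mul_sum, h1, mul_one]

open Classical in
/-- Markov's inequality for the finite product distribution. -/
lemma markov_probOf (h0 : ∀ x, 0 ≤ μ x) (h1 : ∑ x, μ x = 1) (X : (V → D) → ℝ)
    (hX : ∀ r, 0 ≤ X r) {a δ : ℝ} (ha : 0 < a)
    (hE : ∑ r : V → D, (∏ v, μ (r v)) * X r ≤ δ * a) :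
    1 - δ ≤ probOf μ (fun r => X r ≤ a) := by
  classical
  have hkey : 1 - (∑ r : V → D, (∏ v, μ (r v)) * X r) / a ≤ probOf μ (fun r => X r ≤ a) := by
    have hrw : 1 - (∑ r : V → D, (∏ v, μ (r v)) * X r) / a =
        ∑ r : V → D, (∏ v, μ (r v)) * (1 - X r / a) := by
      simp only [mul_sub, mul_one, Finset.sum_sub_distrib, sum_weight h1, Finset.sum_div,
        mul_div_assoc]
    rw [probOf_eq_sum_ite, hrw]
    refine Finset.sum_le_sum fun r _ => ?_
    have hw := weight_nonneg h0 r
    refine mul_le_mul_of_nonneg_left ?_ hw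
    split_ifs with h
    · have := div_nonneg (hX r) ha.le
      linarith
    · have := (one_le_div ha).2 (not_le.1 h).le
      linarith
  have : (∑ r : V → D, (∏ v, μ (r v)) * X r) / a ≤ δ := (div_le_iff₀ ha).2 hE
  linarith

open Classical in
/-- The set of vertices whose label reappears within distance two. -/
noncomputable def collisionSet (G : SimpleGraph V) (r : V → D) : Finset V :=
  Finset.univ.filter (fun v => ∃ u ∈ ballSet G v 2, u ≠ v ∧ r u = r v)

open Classical in
lemma expect_collisionSet_le {p : ℝ} {Δ : ℕ} (h0 : ∀ x, 0 ≤ μ x) (h1 : ∑ x, μ x = 1)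
    (hp0 : 0 ≤ p) (hp : ∀ x, μ x ≤ p) (G : SimpleGraph V)
    (hd : ∀ w : V, (G.neighborSet w).ncard ≤ Δ) :
    ∑ r : V → D, (∏ v, μ (r v)) * ((collisionSet G r).card : ℝ) ≤
      Fintype.card V * (((Δ : ℝ) + 1) ^ 2 * p) := by
  classical
  let B : V → Finset V := fun v => (closedNbhdF G (closedNbhdF G {v})).erase v
  have hB : ∀ v, ((B v).card : ℝ) ≤ ((Δ : ℝ) + 1) ^ 2 := by
    intro v
    have h : (B v).card ≤ (Δ + 1) ^ 2 := by
      refine (Finset.card_erase_le).trans ((card_closedNbhdF_le G hd _).trans ?_)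
      rw [sq]
      exact Nat.mul_le_mul_right _ (card_closedNbhdF_singleton_le G hd v)
    exact_mod_cast h
  have hcard : ∀ r : V → D, ((collisionSet G r).card : ℝ) ≤
      ∑ v, ∑ u ∈ B v, if r u = r v then (1 : ℝ) else 0 := by
    intro r
    rw [collisionSet, Finset.card_filter, Nat.cast_sum]
    refine Finset.sum_le_sum fun v _ => ?_
    have hnn : ∀ u ∈ B v, (0 : ℝ) ≤ if r u = r v then (1 : ℝ) else 0 := fun u _ => by
      split_ifs <;> norm_num
    split_ifs with h
    · obtain ⟨u, hu, hne, hr⟩ := h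
      have := Finset.single_le_sum hnn
        (Finset.mem_erase.2 ⟨hne, ballSet_two_subset G v u hu⟩)
      simpa [hr] using this
    · simpa only [Nat.cast_zero] using Finset.sum_nonneg hnn
  calc ∑ r : V → D, (∏ v, μ (r v)) * ((collisionSet G r).card : ℝ)
      ≤ ∑ r : V → D, (∏ v, μ (r v)) * ∑ v, ∑ u ∈ B v, if r u = r v then (1 : ℝ) else 0 :=
        Finset.sum_le_sum fun r _ => mul_le_mul_of_nonneg_left (hcard r) (weight_nonneg h0 r)
    _ = ∑ v, ∑ u ∈ B v, probOf μ (fun r : V → D => r u = r v) := by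
        simp only [probOf_eq_sum_ite, Finset.mul_sum]
        rw [Finset.sum_comm]
        exact Finset.sum_congr rfl fun v _ => Finset.sum_comm
    _ ≤ ∑ v : V, ((Δ : ℝ) + 1) ^ 2 * p := by
        refine Finset.sum_le_sum fun v _ => ?_
        refine (Finset.sum_le_card_nsmul _ _ p fun u hu =>
          collision_prob_le h0 h1 hp (Finset.ne_of_mem_erase hu)).trans ?_
        rw [nsmul_eq_mul]
        exact mul_le_mul_of_nonneg_right (hB v) hp0
    _ = _ := by simp

end Probability

/-! ### The approximation guarantee -/

/-- Fix `Δ ≥ 2`. For all `ε, δ > 0` there exists `p > 0` such that for every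
probability distribution `μ` on a finite linearly ordered set `D` with `μ {x} ≤ p` for all
`x`, and every finite connected simple graph `G` with maximum degree at most `Δ`:
the output `S` of the randomized greedy algorithm is a dominating set of `G` for every
realization of the labels, and with probability at least `1 − δ` it satisfies
`|S| ≤ (H(Δ+1) + ε) · γ(G)`. -/
theorem stmt_9 (Δ : ℕ) (hΔ : 2 ≤ Δ) (ε δ : ℝ) (hε : 0 < ε) (hδ : 0 < δ) :
    ∃ p : ℝ, 0 < p ∧
      ∀ (D : Type) [Fintype D] [LinearOrder D] (μ : D → ℝ),
        (∀ x, 0 ≤ μ x) → (∑ x, μ x = 1) → (∀ x, μ x ≤ p) →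
        ∀ (V : Type) [Fintype V] [LinearOrder V] (G : SimpleGraph V),
          G.Connected → (∀ w : V, (G.neighborSet w).ncard ≤ Δ) →
          (∀ r : V → D, IsDomSet G (↑(randomizedGreedy G r) : Set V)) ∧
          1 - δ ≤ probOf μ (fun r : V → D =>
            ((randomizedGreedy G r).card : ℝ) ≤
              ((∑ i ∈ Finset.range (Δ + 1), (1 : ℝ) / (i + 1)) + ε) *
                dominationNumber G) := by
  refine ⟨ε * δ / ((Δ : ℝ) + 1) ^ 3, by positivity, ?_⟩
  intro D _ _ μ h0 h1 hp V _ _ G hconn hd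
  classical
  have hinit : ∀ r : V → D, randomizedGreedy G r =
      (greedyStepOrd G (labelOrder r))^[Fintype.card V] (collisionSet G r) := fun r => by
    unfold randomizedGreedy collisionSet
    congr!
  obtain ⟨T, hT, hTcard⟩ := exists_min_domSet G
  have hn : (Fintype.card V : ℝ) ≤ dominationNumber G * ((Δ : ℝ) + 1) := by
    have h := card_closedNbhdF_le G hd T
    rw [hT, Finset.card_univ, hTcard] at h
    exact_mod_cast h
  have hγ : (0 : ℝ) < dominationNumber G := by
    have hV : Nonempty V := hconn.nonempty
    have hpos : (0 : ℝ) < Fintype.card V := by exact_mod_cast Fintype.card_pos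
    by_contra! h
    have : (dominationNumber G : ℝ) * ((Δ : ℝ) + 1) ≤ 0 :=
      mul_nonpos_of_nonpos_of_nonneg h (by positivity)
    linarith
  constructor
  · intro r v
    have hv : v ∈ closedNbhdF G (randomizedGreedy G r) := by
      rw [hinit, greedy_iterate_eq_univ]
      exact Finset.mem_univ v
    simpa [mem_closedNbhdF] using hv
  · refine (markov_probOf h0 h1 (fun r : V → D => ((collisionSet G r).card : ℝ))
      (fun _ => Nat.cast_nonneg _) (a := ε * dominationNumber G) (mul_pos hε hγ) ?_).trans
      (probOf_mono h0 fun r hr => ?_)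
    · refine (expect_collisionSet_le h0 h1 (by positivity) hp G hd).trans ?_
      calc (Fintype.card V : ℝ) * (((Δ : ℝ) + 1) ^ 2 * (ε * δ / ((Δ : ℝ) + 1) ^ 3))
          ≤ dominationNumber G * ((Δ : ℝ) + 1) *
            (((Δ : ℝ) + 1) ^ 2 * (ε * δ / ((Δ : ℝ) + 1) ^ 3)) :=
            mul_le_mul_of_nonneg_right hn (by positivity)
        _ = δ * (ε * dominationNumber G) := by field_simp
    · have h := greedy_card_le G hd (labelOrder r) hT (collisionSet G r) (Fintype.card V)
      rw [← hinit, hTcard] at h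
      change ((randomizedGreedy G r).card : ℝ) ≤ (harm (Δ + 1) + ε) * dominationNumber G
      linarith
end

section
/- Fix an integer Δ ≥ 2. For every positive integer L and every δ > 0 there exists p > 0 with the following property. For every finite set 𝒞 ⊂ ℝ^{d_I}, every set 𝒢 of rooted vertex-featured graphs with features in 𝒞 and maximum degree at most Δ, and every probability distribution μ on a finite set D ⊂ ℝ^{d_r} with μ({x}) ≤ p for all x ∈ D, there exist GIN parameters θ with one-dimensional output such that for every finite connected simple graph G = (V,E) with maximum degree at most Δ and vertex features x_v ∈ 𝒞 and every vertex v ∈ V, when labels (r_u)_{u∈V} are sampled i.i.d. from μ and the GIN is run with input features h_u = (x_u, r_u) producing outputs z_u ∈ ℝ: (i) if there exists (G'',v'') ∈ 𝒢 with (G'',v'') isomorphic to (R(G,v,L), v) as rooted vertex-featured graphs (isomorphism preserving the features x), then z_v > 0.5 with probability at least 1 − δ; (ii) if no member of 𝒢 is isomorphic to (R(G,v,L), v), then z_v < 0.5 with probability at least 1 − δ. -/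
/-!
The ball of radius `L + 1` around a vertex has at most `N = (Δ + 1) ^ (L + 1)` vertices, so if all
atoms of `μ` are at most `p = δ / N ^ 2`, a union bound over pairs shows that the labels on this
ball are distinct with probability at least `1 - δ` (`le_probOver`).

When they are distinct, the level-`(L+1)` tree of `v` determines the rooted `L`-ball up to
isomorphism (`exists_ball_iso`): labels name the vertices of the ball, and the tree records which
names are adjacent. Depth `L + 1` rather than `L` is needed to see the edges between two vertices
at distance exactly `L` from `v`. Hence membership of the ball in `𝒢` is, on this event, a
function `φ` of the tree, and `φ` depends neither on the graph nor on the sampled labels.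

Finally, features and labels lie in finite sets and degrees are at most `Δ`, so only finitely many
trees occur, and a GIN of depth `L + 1` computes any real function of them (`gin_universal`). All
its embeddings are one-dimensional. The one-hot vectors of the trees of a level, aggregated with
`ε = Δ`, determine the root tree and the multiset of neighbour trees (`oneHot_injOn`); a generic
linear functional keeps the finitely many aggregates apart (`exists_dual_injOn`), so scalar codes
suffice. The MLP of each layer interpolates the code of the next level on these finitely many
points (`mlp_interp`), and the last one interpolates `φ`.
-/

/-- An MLP: a finite alternating composition of affine maps and the entrywise ReLU
activation `x ↦ max(x, 0)`. -/
inductive IsMLP : ∀ (a b : ℕ), ((Fin a → ℝ) → (Fin b → ℝ)) → Prop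
  | affine (a b : ℕ) (W : Fin b → Fin a → ℝ) (c : Fin b → ℝ) :
      IsMLP a b (fun x i => (∑ j, W i j * x j) + c i)
  | comp (a b c : ℕ) (f : (Fin a → ℝ) → (Fin b → ℝ)) (g : (Fin b → ℝ) → (Fin c → ℝ)) :
      IsMLP a b f → IsMLP b c g →
      IsMLP a c (fun x => g (fun i => max (f x i) 0))

/-- GIN parameters `θ`: a depth `K`, layer dimensions, MLPs `MLP_0, …, MLP_K`, and reals
`ε^(1), …, ε^(K)`; the last layer has dimension `dOut`. -/
structure GINParams (dIn dOut : ℕ) where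
  K : ℕ
  dims : ℕ → ℕ
  hdims : dims K = dOut
  mlp0 : (Fin dIn → ℝ) → (Fin (dims 0) → ℝ)
  mlp : (l : ℕ) → (Fin (dims l) → ℝ) → (Fin (dims (l + 1)) → ℝ)
  eps : ℕ → ℝ
  mlp0_spec : IsMLP dIn (dims 0) mlp0
  mlp_spec : ∀ l, IsMLP (dims l) (dims (l + 1)) (mlp l)

open Classical in
/-- The GIN layer embeddings: `z_v^(0) = MLP_0(h_v)` and
`z_v^(l) = MLP_l((1 + ε^(l)) z_v^(l−1) + ∑_{u ∈ N(v)} z_u^(l−1))`. -/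
noncomputable def GINemb {dIn dOut : ℕ} (θ : GINParams dIn dOut) {V : Type} [Fintype V]
    (G : SimpleGraph V) (h : V → Fin dIn → ℝ) : (l : ℕ) → V → Fin (θ.dims l) → ℝ
  | 0 => fun v => θ.mlp0 (h v)
  | (l + 1) => fun v => θ.mlp l (fun i =>
      (1 + θ.eps (l + 1)) * GINemb θ G h l v i +
        ∑ u ∈ G.neighborFinset v, GINemb θ G h l u i)

/-- The GIN output embeddings `z_v = z_v^(K)`. -/
noncomputable def GINout {dIn dOut : ℕ} (θ : GINParams dIn dOut) {V : Type} [Fintype V]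
    (G : SimpleGraph V) (h : V → Fin dIn → ℝ) (v : V) : Fin dOut → ℝ :=
  fun i => GINemb θ G h θ.K v (Fin.cast θ.hdims.symm i)

/-- The type of level-`l` trees with labels in `A`. -/
def TreeT (A : Type) : ℕ → Type
  | 0 => A
  | (l + 1) => TreeT A l × Multiset (TreeT A l)

open Classical in
/-- The level-`l` tree of `v` in `G` with vertex labels `a`:
`T(G, v, 0) = a_v` and `T(G, v, l) = (T(G, v, l−1), {T(G, u, l−1) : u ∈ N(v)})`
(the second component a multiset). -/
noncomputable def levelTree {V A : Type} [Fintype V] (G : SimpleGraph V) (a : V → A) :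
    (l : ℕ) → V → TreeT A l
  | 0 => fun v => a v
  | (l + 1) => fun v =>
      (levelTree G a l v, (G.neighborFinset v).val.map (levelTree G a l))

open Classical in
/-- The probability, when labels `r : V → A` are sampled i.i.d. from the distribution `μ`
supported on the finite set `D ⊆ A` (joint law the product measure `μ^V`), that the
predicate `P` holds of the labeling. -/
noncomputable def probOver {V A : Type} [Fintype V] (D : Finset A) (μ : A → ℝ)
    (P : (V → A) → Prop) : ℝ :=
  ∑ r ∈ (Fintype.piFinset (fun _ : V => D)).filter P, ∏ v, μ (r v)

/-- A rooted vertex-featured graph with features in `ℝ^{d_I}`. -/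
structure RootedFeatGraph (dI : ℕ) where
  n : ℕ
  graph : SimpleGraph (Fin n)
  feat : Fin n → Fin dI → ℝ
  root : Fin n

/-- `H` is isomorphic, as a rooted vertex-featured graph, to `(R(G, v, L), v)`, the
subgraph of `G` induced by `N_L(v)` (with features `x`) rooted at `v`: there is a graph
isomorphism mapping root to root and preserving the features. -/
def IsoToBall {dI : ℕ} (H : RootedFeatGraph dI) {V : Type} (G : SimpleGraph V)
    (x : V → Fin dI → ℝ) (v : V) (L : ℕ) : Prop :=
  ∃ φ : H.graph ≃g (G.induce (ballSet G v L)),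
    (∀ w, x (φ w).1 = H.feat w) ∧ (φ H.root).1 = v

/-! ### Genericity and ReLU interpolation -/

/-- A finite set of vectors is separated by a single linear functional. -/
lemma exists_dual_injOn {M : Type*} [AddCommGroup M] [Module ℝ M] {S : Set M} (hS : S.Finite) :
    ∃ w : Module.Dual ℝ M, Set.InjOn w S := by
  have := hS.to_subtype
  obtain ⟨w, hw⟩ := Module.exists_dual_forall_apply_ne_zero (K := ℝ)
    (fun q : {q : S × S // q.1 ≠ q.2} => (q.1.1 : M) - q.1.2)
    (fun q => sub_ne_zero.2 fun h => q.2 (Subtype.ext h))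
  refine ⟨w, fun x hx y hy hxy => ?_⟩
  by_contra hne
  refine hw ⟨(⟨x, hx⟩, ⟨y, hy⟩), fun h => hne (congrArg Subtype.val h)⟩ ?_
  simp [hxy]

/-- Every real function on a finite set of reals is interpolated by a one-hidden-layer ReLU
function. Points are added in increasing order: a ramp starting at the previous maximum
corrects the value at the new point and leaves the old ones alone. -/
lemma relu_interp (f : ℝ → ℝ) (S : Finset ℝ) :
    ∃ (n : ℕ) (a b : Fin n → ℝ) (c : ℝ),
      ∀ t ∈ S, (∑ j, a j * max (t - b j) 0) + c = f t := by
  induction S using Finset.induction_on_max with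
  | empty => exact ⟨0, fun _ => 0, fun _ => 0, 0, by simp⟩
  | insert M s hM ih =>
    obtain ⟨n, a, b, c, h⟩ := ih
    rcases s.eq_empty_or_nonempty with rfl | hs
    · exact ⟨0, fun _ => 0, fun _ => 0, f M, by simp⟩
    · have hlt : s.max' hs < M := hM _ (s.max'_mem hs)
      refine ⟨n + 1,
        Fin.cons ((f M - ((∑ j, a j * max (M - b j) 0) + c)) / (M - s.max' hs)) a,
        Fin.cons (s.max' hs) b, c, fun t ht => ?_⟩
      rw [Fin.sum_univ_succ]
      simp only [Fin.cons_zero, Fin.cons_succ]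
      rcases Finset.mem_insert.1 ht with rfl | ht
      · rw [max_eq_left (sub_nonneg.2 hlt.le), div_mul_cancel₀ _ (sub_pos.2 hlt).ne']
        ring
      · rw [max_eq_right (sub_nonpos.2 (s.le_max' t ht)), mul_zero, zero_add, h t ht]

/-- MLPs realise every real-valued function on a finite set that is injectively embedded in the
input space. -/
lemma mlp_interp {α : Type*} {a : ℕ} {S : Set α} (hS : S.Finite) (enc : α → Fin a → ℝ)
    (henc : Set.InjOn enc S) (g : α → ℝ) :
    ∃ f, IsMLP a 1 f ∧ ∀ s ∈ S, ∀ i, f (enc s) i = g s := by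
  obtain ⟨w, hw⟩ := exists_dual_injOn (hS.image enc)
  have hinj : Set.InjOn (fun s => w (enc s)) S := fun x hx y hy h =>
    henc hx hy (hw (Set.mem_image_of_mem _ hx) (Set.mem_image_of_mem _ hy) h)
  rcases S.eq_empty_or_nonempty with rfl | ⟨s₀, hs₀⟩
  · exact ⟨_, IsMLP.affine a 1 0 0, by simp⟩
  have : Nonempty α := ⟨s₀⟩
  obtain ⟨n, A, b, c, h⟩ := relu_interp
    (fun t => g (Function.invFunOn (fun s => w (enc s)) S t)) (hS.image fun s => w (enc s)).toFinset
  refine ⟨_, IsMLP.comp a n 1 _ _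
    (IsMLP.affine a n (fun _ j => w (fun k => if j = k then 1 else 0)) (fun j => -b j))
    (IsMLP.affine n 1 (fun _ j => A j) (fun _ => c)), fun s hs i => ?_⟩
  have key := h (w (enc s)) (by simpa using ⟨s, hs, rfl⟩)
  rw [hinj.leftInvOn_invFunOn hs] at key
  rw [← key, LinearMap.pi_apply_eq_sum_univ w (enc s)]
  simp [sub_eq_add_neg, mul_comm]

/-! ### GINs compute arbitrary functions of level trees -/

/-- The level-`l` trees with labels in `F` whose multisets all have at most `Δ` members; it
contains every level tree of a graph of maximum degree `Δ` labelled by `F`. -/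
def treeSet {A : Type} (Δ : ℕ) (F : Set A) : (l : ℕ) → Set (TreeT A l)
  | 0 => F
  | (l + 1) => {q : TreeT A l × Multiset (TreeT A l) |
      q.1 ∈ treeSet Δ F l ∧ q.2.card ≤ Δ ∧ ∀ s ∈ q.2, s ∈ treeSet Δ F l}

lemma finite_multiset {α : Type*} {S : Set α} (hS : S.Finite) (n : ℕ) :
    {m : Multiset α | m.card ≤ n ∧ ∀ s ∈ m, s ∈ S}.Finite := by
  classical
  refine (Set.finite_Iic (n • hS.toFinset.val)).subset fun m hm => Multiset.le_iff_count.2 fun s => ?_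
  by_cases hs : s ∈ m
  · have h1 : hS.toFinset.val.count s = 1 :=
      Multiset.count_eq_one_of_mem hS.toFinset.nodup (by simpa using hm.2 s hs)
    rw [Multiset.count_nsmul, h1, mul_one]
    exact (Multiset.count_le_card _ _).trans hm.1
  · simp [Multiset.count_eq_zero_of_notMem hs]

lemma treeSet_finite {A : Type} (Δ : ℕ) {F : Set A} (hF : F.Finite) :
    ∀ l, (treeSet Δ F l).Finite
  | 0 => hF
  | (l + 1) => by
    have ih := treeSet_finite Δ hF l
    exact (ih.prod (finite_multiset ih Δ)).subset fun q hq => ⟨hq.1, hq.2⟩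

lemma card_neighborFinset_le {V : Type} {G : SimpleGraph V} {v : V} {Δ : ℕ}
    [Fintype (G.neighborSet v)] (h : (G.neighborSet v).ncard ≤ Δ) :
    (G.neighborFinset v).card ≤ Δ := by
  rwa [SimpleGraph.neighborFinset, ← Set.ncard_eq_toFinset_card']

lemma levelTree_mem {A V : Type} [Fintype V] {Δ : ℕ} {F : Set A} {G : SimpleGraph V} {a : V → A}
    (hG : ∀ w, (G.neighborSet w).ncard ≤ Δ) (ha : ∀ v, a v ∈ F) :
    ∀ l v, levelTree G a l v ∈ treeSet Δ F l
  | 0, v => ha v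
  | (l + 1), v => by
    classical
    have ih := levelTree_mem hG ha l
    refine ⟨ih v, ?_, ?_⟩
    · simpa [levelTree] using card_neighborFinset_le (hG v)
    · intro s hs
      obtain ⟨u, -, rfl⟩ := Multiset.mem_map.1 hs
      exact ih u

open Classical in
/-- With weight `Δ + 1` on the root, the one-hot sum of a root tree and at most `Δ` neighbour
trees determines both: the root is the only coordinate exceeding `Δ`. -/
lemma oneHot_injOn {α : Type*} (Δ : ℕ) :
    Set.InjOn (fun q : α × Multiset α =>
      ((Δ : ℝ) + 1) • (Pi.single q.1 1 : α → ℝ) + (q.2.map fun s => Pi.single s 1).sum)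
      {q | q.2.card ≤ Δ} := by
  have hcount : ∀ (m : Multiset α) (s : α),
      ((m.map fun s => (Pi.single s 1 : α → ℝ)).sum) s = m.count s := by
    intro m s
    induction m using Multiset.induction_on with
    | empty => simp
    | cons x m ih =>
      rw [Multiset.map_cons, Multiset.sum_cons, Pi.add_apply, ih, Multiset.count_cons,
        Pi.single_apply]
      push_cast
      ring
  rintro ⟨t, m⟩ hm ⟨t', m'⟩ hm' h
  simp only [Set.mem_ofPred_eq] at hm hm'
  have hs : ∀ s, ((Δ : ℝ) + 1) * (if s = t then 1 else 0) + m.count s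
      = ((Δ : ℝ) + 1) * (if s = t' then 1 else 0) + m'.count s := by
    intro s
    have := congrFun h s
    simpa [hcount, Pi.single_apply] using this
  have htt : t = t' := by
    by_contra hne
    have h1 := hs t
    have h2 : (m'.count t : ℝ) ≤ Δ := by exact_mod_cast (Multiset.count_le_card _ _).trans hm'
    have h3 : (0 : ℝ) ≤ m.count t := by positivity
    simp [hne] at h1
    linarith
  subst htt
  refine Prod.ext rfl (Multiset.ext.2 fun s => ?_)
  have := hs s
  simpa using this

/-- For each level a scalar code of trees exists such that a single MLP, applied to the GIN
aggregate of the codes with `ε = Δ`, produces any prescribed function of the next-level tree. -/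
lemma exists_code {A : Type} (Δ : ℕ) {F : Set A} (hF : F.Finite) (l : ℕ) :
    ∃ e : TreeT A l → ℝ, ∀ g : TreeT A (l + 1) → ℝ, ∃ f, IsMLP 1 1 f ∧
      ∀ q ∈ treeSet Δ F (l + 1), ∀ i,
        f (fun _ => (1 + (Δ : ℝ)) * e q.1 + (q.2.map e).sum) i = g q := by
  classical
  obtain ⟨w, hw⟩ := exists_dual_injOn ((treeSet_finite Δ hF (l + 1)).image
    (fun q : TreeT A l × Multiset (TreeT A l) =>
      ((Δ : ℝ) + 1) • (Pi.single q.1 1 : TreeT A l → ℝ) + (q.2.map fun s => Pi.single s 1).sum))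
  refine ⟨fun t => w (Pi.single t 1), fun g =>
    mlp_interp (treeSet_finite Δ hF (l + 1)) _ (fun q hq q' hq' h => ?_) g⟩
  have hq2 : q.2.card ≤ Δ := hq.2.1
  have hq2' : q'.2.card ≤ Δ := hq'.2.1
  refine oneHot_injOn Δ hq2 hq2' (hw (Set.mem_image_of_mem _ hq) (Set.mem_image_of_mem _ hq') ?_)
  have h0 := congrFun h 0
  simp only [map_add, map_smul, map_multiset_sum, Multiset.map_map, smul_eq_mul]
  rw [add_comm (Δ : ℝ) 1]
  exact h0

/-- On bounded-degree graphs with labels in a finite set, every real function of the level-`(L+1)`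
tree is the output of some GIN of depth `L + 1`. -/
lemma gin_universal {d : ℕ} (Δ : ℕ) {F : Set (Fin d → ℝ)} (hF : F.Finite) (L : ℕ)
    (φ : TreeT (Fin d → ℝ) (L + 1) → ℝ) :
    ∃ θ : GINParams d 1, ∀ (V : Type) [Fintype V] (G : SimpleGraph V),
      (∀ w : V, (G.neighborSet w).ncard ≤ Δ) → ∀ a : V → Fin d → ℝ, (∀ w, a w ∈ F) →
      ∀ v, GINout θ G a v 0 = φ (levelTree G a (L + 1) v) := by
  choose e he using exists_code (A := Fin d → ℝ) Δ hF
  obtain ⟨f0, hf0, hf0'⟩ := mlp_interp hF id (Function.injective_id.injOn) (e 0)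
  -- The target of each layer is the code of its level, except `φ` at the last one.
  choose f hf hf' using fun l => he l (Function.update e (L + 1) φ (l + 1))
  refine ⟨⟨L + 1, fun _ => 1, rfl, f0, f, fun _ => Δ, hf0, hf⟩, fun V _ G hG a ha v => ?_⟩
  set θ : GINParams d 1 := ⟨L + 1, fun _ => 1, rfl, f0, f, fun _ => Δ, hf0, hf⟩
  have step : ∀ l, (∀ u (i : Fin 1), GINemb θ G a l u i = e l (levelTree G a l u)) →
      ∀ u (i : Fin 1), GINemb θ G a (l + 1) u i =
        Function.update e (L + 1) φ (l + 1) (levelTree G a (l + 1) u) := by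
    intro l hl u i
    rw [← hf' l _ (levelTree_mem hG ha (l + 1) u) i]
    change f l _ i = f l _ i
    congr 1
    funext j
    simp only [levelTree, Multiset.map_map]
    rw [hl u j]
    congr 1
    exact Finset.sum_congr rfl fun u' _ => hl u' j
  have main : ∀ l, l ≤ L → ∀ u (i : Fin 1), GINemb θ G a l u i = e l (levelTree G a l u) := by
    intro l
    induction l with
    | zero => exact fun _ u i => hf0' (a u) (ha u) i
    | succ l ih =>
      intro hl u i
      rw [step l (ih (by omega)) u i, Function.update_of_ne (by omega)]
  have := step L (main L le_rfl) v 0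
  rw [Function.update_self] at this
  exact this

/-! ### Level trees with distinct labels determine balls -/

lemma ballSet_mono {V : Type} {G : SimpleGraph V} {v : V} {k l : ℕ} (h : k ≤ l) :
    ballSet G v k ⊆ ballSet G v l :=
  fun _ hu => le_trans (show G.edist v _ ≤ _ from hu) (by exact_mod_cast h)

lemma mem_ballSet_self {V : Type} {G : SimpleGraph V} {v : V} (k : ℕ) : v ∈ ballSet G v k := by
  simp [ballSet]

lemma mem_ballSet_zero {V : Type} {G : SimpleGraph V} {v u : V} :
    u ∈ ballSet G v 0 ↔ u = v := by
  simp [ballSet, eq_comm (a := u)]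

lemma mem_ballSet_succ_of_adj {V : Type} {G : SimpleGraph V} {v u w : V} {k : ℕ}
    (hu : u ∈ ballSet G v k) (h : G.Adj u w) : w ∈ ballSet G v (k + 1) := by
  refine (G.edist_triangle (v := u)).trans ?_
  rw [SimpleGraph.edist_eq_one_iff_adj.2 h]
  push_cast
  exact add_le_add_left (show G.edist v u ≤ _ from hu) 1

lemma exists_of_mem_ballSet_succ {V : Type} {G : SimpleGraph V} {v w : V} {k : ℕ}
    (hw : w ∈ ballSet G v (k + 1)) : ∃ u ∈ ballSet G v k, u = w ∨ G.Adj u w := by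
  have hw' : G.edist v w ≤ ((k + 1 : ℕ) : ℕ∞) := hw
  obtain ⟨p, hp⟩ := G.exists_walk_of_edist_ne_top (u := v) (v := w)
    (fun h => by rw [h] at hw'; exact absurd hw' (by simp))
  rw [← hp] at hw'
  have hlen : p.length ≤ k + 1 := by exact_mod_cast hw'
  rcases Nat.lt_or_ge p.length (k + 1) with hlt | hge
  · exact ⟨w, p.edist_le.trans (by exact_mod_cast Nat.lt_succ_iff.1 hlt), Or.inl rfl⟩
  · have hnil : ¬ p.Nil := fun h => by
      have := SimpleGraph.Walk.length_eq_zero_iff.2 h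
      omega
    refine ⟨p.penultimate, p.dropLast.edist_le.trans ?_, Or.inr (p.adj_penultimate hnil)⟩
    have : p.dropLast.length ≤ k := by
      simp
      omega
    exact_mod_cast this

section Reconstruct

variable {V V' A : Type} [Fintype V] [Fintype V'] {G : SimpleGraph V} {G' : SimpleGraph V'}
  {a : V → A} {a' : V' → A}

lemma levelTree_of_succ {k : ℕ} {u : V} {u' : V'}
    (h : levelTree G a (k + 1) u = levelTree G' a' (k + 1) u') :
    levelTree G a k u = levelTree G' a' k u' :=
  congrArg Prod.fst h

lemma label_eq_of_levelTree {k : ℕ} {u : V} {u' : V'}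
    (h : levelTree G a k u = levelTree G' a' k u') : a u = a' u' := by
  induction k with
  | zero => exact h
  | succ k ih => exact ih (levelTree_of_succ h)

lemma exists_adj_of_levelTree {k : ℕ} {u w : V} {u' : V'}
    (h : levelTree G a (k + 1) u = levelTree G' a' (k + 1) u') (hw : G.Adj u w) :
    ∃ w', G'.Adj u' w' ∧ levelTree G a k w = levelTree G' a' k w' := by
  classical
  have h2 : levelTree G a k w ∈ (levelTree G a (k + 1) u).2 :=
    Multiset.mem_map_of_mem _ (by simpa using hw)
  rw [h] at h2
  obtain ⟨w', hw', he⟩ := Multiset.mem_map.1 h2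
  exact ⟨w', by simpa using hw', he.symm⟩

/-- Each step away from the root costs one level of the tree. -/
lemma exists_match {K : ℕ} {v : V} {v' : V'}
    (h : levelTree G a K v = levelTree G' a' K v') (j k : ℕ) (hjk : j + k = K) :
    ∀ u ∈ ballSet G v j, ∃ u' ∈ ballSet G' v' j, levelTree G a k u = levelTree G' a' k u' := by
  induction j generalizing k with
  | zero =>
    intro u hu
    obtain rfl : k = K := by omega
    rw [mem_ballSet_zero.1 hu]
    exact ⟨v', mem_ballSet_self 0, h⟩
  | succ j ih =>
    intro w hw
    obtain ⟨u, hu, huw⟩ := exists_of_mem_ballSet_succ hw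
    obtain ⟨u', hu', heq⟩ := ih (k + 1) (by omega) u hu
    rcases huw with rfl | huw
    · exact ⟨u', ballSet_mono (Nat.le_succ j) hu', levelTree_of_succ heq⟩
    · obtain ⟨w', hw', he⟩ := exists_adj_of_levelTree heq huw
      exact ⟨w', mem_ballSet_succ_of_adj hu' hw', he⟩

/-- Label-matched vertices of the two `L`-balls have matching adjacencies: a neighbour of the
first vertex is matched by some neighbour of the second, which distinctness of labels on the
`(L+1)`-ball identifies. -/
lemma adj_of_match {L : ℕ} {v : V} {v' : V'}
    (h : levelTree G a (L + 1) v = levelTree G' a' (L + 1) v')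
    (hinj : Set.InjOn a' (ballSet G' v' (L + 1))) {u w : V} {u' w' : V'}
    (hu : u ∈ ballSet G v L) (hu' : u' ∈ ballSet G' v' L) (hw' : w' ∈ ballSet G' v' L)
    (hau : a u = a' u') (haw : a w = a' w') (hadj : G.Adj u w) : G'.Adj u' w' := by
  obtain ⟨y, hy, hyt⟩ := exists_match h L 1 rfl u hu
  have hyu : y = u' := hinj (ballSet_mono (Nat.le_succ L) hy) (ballSet_mono (Nat.le_succ L) hu')
    (by rw [← hau, label_eq_of_levelTree hyt])
  subst hyu
  obtain ⟨z, hz, hzt⟩ := exists_adj_of_levelTree hyt hadj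
  have hzw : z = w' := hinj (mem_ballSet_succ_of_adj hu' hz) (ballSet_mono (Nat.le_succ L) hw')
    (by rw [← haw, label_eq_of_levelTree hzt])
  exact hzw ▸ hz

/-- If the `(L+1)`-balls carry distinct labels, the level-`(L+1)` tree determines the labelled
rooted `L`-ball up to isomorphism. The extra level is what reveals the edges joining two vertices
at distance exactly `L` from the root. -/
lemma exists_ball_iso {L : ℕ} {v : V} {v' : V'}
    (h : levelTree G a (L + 1) v = levelTree G' a' (L + 1) v')
    (hinj : Set.InjOn a (ballSet G v (L + 1))) (hinj' : Set.InjOn a' (ballSet G' v' (L + 1))) :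
    ∃ φ : G.induce (ballSet G v L) ≃g G'.induce (ballSet G' v' L),
      (∀ w, a' (φ w).1 = a w.1) ∧ ∀ w, w.1 = v → (φ w).1 = v' := by
  have ex : ∀ u : ballSet G v L, ∃ u' : ballSet G' v' L, a u.1 = a' u'.1 := fun u =>
    let ⟨u', hu', e⟩ := exists_match h L 1 rfl u.1 u.2
    ⟨⟨u', hu'⟩, label_eq_of_levelTree e⟩
  have ex' : ∀ u' : ballSet G' v' L, ∃ u : ballSet G v L, a' u'.1 = a u.1 := fun u' =>
    let ⟨u, hu, e⟩ := exists_match h.symm L 1 rfl u'.1 u'.2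
    ⟨⟨u, hu⟩, label_eq_of_levelTree e⟩
  choose f hf using ex
  choose g hg using ex'
  have up := ballSet_mono (G := G) (v := v) (Nat.le_succ L)
  have up' := ballSet_mono (G := G') (v := v') (Nat.le_succ L)
  refine ⟨⟨⟨f, g, fun u => ?_, fun u' => ?_⟩, fun {u w} => ?_⟩, fun w => (hf w).symm,
    fun w hw => ?_⟩
  · exact Subtype.ext (hinj (up (g (f u)).2) (up u.2) (by rw [← hg, ← hf]))
  · exact Subtype.ext (hinj' (up' (f (g u')).2) (up' u'.2) (by rw [← hf, ← hg]))
  · exact ⟨fun hadj => adj_of_match h.symm hinj (f u).2 u.2 w.2 (hf u).symm (hf w).symm hadj,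
      fun hadj => adj_of_match h hinj' u.2 (f u).2 (f w).2 (hf u) (hf w) hadj⟩
  · refine hinj' (up' (f w).2) (mem_ballSet_self _) ?_
    rw [← hf w, hw, label_eq_of_levelTree h]

end Reconstruct

/-! ### Distinct labels are likely -/

lemma ballSet_ncard_le {V : Type} [Fintype V] {G : SimpleGraph V} {Δ : ℕ}
    (hG : ∀ w, (G.neighborSet w).ncard ≤ Δ) (v : V) (k : ℕ) :
    (ballSet G v k).ncard ≤ (Δ + 1) ^ k := by
  classical
  induction k with
  | zero =>
    have : ballSet G v 0 = {v} := Set.ext fun u => mem_ballSet_zero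
    simp [this]
  | succ k ih =>
    have hsub : ballSet G v (k + 1) ⊆
        ((ballSet G v k).toFinset.biUnion fun u => insert u (G.neighborFinset u) : Finset V) := by
      intro w hw
      obtain ⟨u, hu, huw⟩ := exists_of_mem_ballSet_succ hw
      simp only [Finset.coe_biUnion, Set.mem_iUnion]
      refine ⟨u, by simpa using hu, ?_⟩
      rcases huw with rfl | huw
      · simp
      · simp [huw]
    refine (Set.ncard_le_ncard hsub).trans ?_
    rw [Set.ncard_coe_finset, pow_succ]
    refine (Finset.card_biUnion_le_card_mul _ _ (Δ + 1) fun u _ => ?_).trans ?_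
    · exact (Finset.card_insert_le _ _).trans
        (Nat.succ_le_succ (card_neighborFinset_le (hG u)))
    · rw [← Set.ncard_eq_toFinset_card']
      exact Nat.mul_le_mul_right _ ih

/-- Two given vertices share a label with probability at most the largest atom of `μ`. -/
lemma collision_le {V A : Type} [Fintype V] [DecidableEq V] [DecidableEq A] {D : Finset A}
    {μ : A → ℝ} {p : ℝ} (h0 : ∀ z, 0 ≤ μ z) (h1 : ∑ z ∈ D, μ z = 1) (hp : ∀ z ∈ D, μ z ≤ p)
    {u w : V} (huw : u ≠ w) :
    ∑ r ∈ Fintype.piFinset (fun _ : V => D), (if r u = r w then ∏ v, μ (r v) else 0) ≤ p := by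
  -- For a fixed common value `z` the collision weight is a product over the vertices.
  have hz : ∀ z ∈ D, ∑ r ∈ Fintype.piFinset (fun _ : V => D),
      ∏ v, μ (r v) * (if v = u ∨ v = w then (if r v = z then 1 else 0) else 1) = μ z * μ z := by
    intro z hz
    rw [Finset.sum_prod_piFinset D
      (fun v y => μ y * (if v = u ∨ v = w then (if y = z then 1 else 0) else 1)),
      Finset.prod_eq_mul u w huw]
    · simp [hz]
    · rintro v - ⟨hvu, hvw⟩
      simp [hvu, hvw, h1]
    · simp
    · simp
  calc _ = ∑ r ∈ Fintype.piFinset (fun _ : V => D), ∑ z ∈ D,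
        ∏ v, μ (r v) * (if v = u ∨ v = w then (if r v = z then 1 else 0) else 1) := by
        refine Finset.sum_congr rfl fun r hr => ?_
        have hru := Fintype.mem_piFinset.1 hr u
        simp_rw [Finset.prod_mul_distrib, ← Finset.mul_sum]
        have : ∀ z, (∏ v, if v = u ∨ v = w then (if r v = z then (1 : ℝ) else 0) else 1)
            = if r u = z then (if r w = z then 1 else 0) else 0 := by
          intro z
          rw [Finset.prod_eq_mul u w huw]
          · simp [← ite_and, and_comm]
          · rintro v - ⟨hvu, hvw⟩
            simp [hvu, hvw]
          · simp
          · simp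
        simp_rw [this]
        rw [Finset.sum_ite_eq D (r u), if_pos hru]
        by_cases h : r u = r w
        · simp [h]
        · simp [h, Ne.symm h]
    _ = ∑ z ∈ D, μ z * μ z := by
        rw [Finset.sum_comm]
        exact Finset.sum_congr rfl hz
    _ ≤ ∑ z ∈ D, p * μ z :=
        Finset.sum_le_sum fun z hz => mul_le_mul_of_nonneg_right (hp z hz) (h0 z)
    _ = p := by rw [← Finset.mul_sum, h1, mul_one]

/-- Union bound over the pairs of vertices of `B`: an event implied by distinctness of the labels
on `B` has probability at least `1 - |B|² p`. -/
lemma le_probOver {V A : Type} [Fintype V] {D : Finset A}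
    {μ : A → ℝ} {p δ : ℝ} (h0 : ∀ z, 0 ≤ μ z) (h1 : ∑ z ∈ D, μ z = 1) (hp : ∀ z ∈ D, μ z ≤ p)
    (hp0 : 0 ≤ p) {N : ℕ} {B : Set V} (hB : B.ncard ≤ N) (hN : (N : ℝ) ^ 2 * p ≤ δ)
    {P : (V → A) → Prop} (hP : ∀ r : V → A, (∀ v, r v ∈ D) → Set.InjOn r B → P r) :
    1 - δ ≤ probOver D μ P := by
  classical
  set Ω := Fintype.piFinset (fun _ : V => D) with hΩ
  have hpos : ∀ r : V → A, 0 ≤ ∏ v, μ (r v) := fun r => Finset.prod_nonneg fun v _ => h0 _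
  have htot : ∑ r ∈ Ω, ∏ v, μ (r v) = 1 := by
    rw [hΩ, Finset.sum_prod_piFinset D (fun _ y => μ y)]
    simp [h1]
  have hbad : ∑ r ∈ Ω.filter (fun r => ¬ P r), ∏ v, μ (r v)
      ≤ ∑ q ∈ B.toFinset.offDiag, ∑ r ∈ Ω, (if r q.1 = r q.2 then ∏ v, μ (r v) else 0) := by
    rw [Finset.sum_comm, Finset.sum_filter]
    refine Finset.sum_le_sum fun r hr => ?_
    have hnn : ∀ q ∈ B.toFinset.offDiag,
        0 ≤ (if r q.1 = r q.2 then ∏ v, μ (r v) else 0) := fun q _ => by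
      split_ifs
      exacts [hpos r, le_rfl]
    split_ifs with hPr
    · exact Finset.sum_nonneg hnn
    · have : ¬ Set.InjOn r B := fun hi => hPr (hP r (Fintype.mem_piFinset.1 hr) hi)
      simp only [Set.InjOn, not_forall] at this
      obtain ⟨u, hu, w, hw, huw, hne⟩ := this
      have := Finset.single_le_sum hnn (a := (u, w)) (by simp [hu, hw, hne])
      simpa [huw] using this
  have hcard : ((B.toFinset.offDiag.card : ℕ) : ℝ) ≤ (N : ℝ) ^ 2 := by
    have : B.toFinset.offDiag.card ≤ N ^ 2 := by
      rw [Finset.offDiag_card, ← Set.ncard_eq_toFinset_card', sq]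
      exact (Nat.sub_le _ _).trans (Nat.mul_le_mul hB hB)
    exact_mod_cast this
  have hbad2 : ∑ q ∈ B.toFinset.offDiag,
      ∑ r ∈ Ω, (if r q.1 = r q.2 then ∏ v, μ (r v) else 0) ≤ δ := by
    refine (Finset.sum_le_card_nsmul _ _ p fun q hq =>
      collision_le h0 h1 hp (Finset.mem_offDiag.1 hq).2.2).trans ?_
    rw [nsmul_eq_mul]
    exact (mul_le_mul_of_nonneg_right hcard hp0).trans hN
  have hsplit := Finset.sum_filter_add_sum_filter_not Ω P (fun r => ∏ v, μ (r v))
  have hgoal : probOver D μ P = ∑ r ∈ Ω.filter P, ∏ v, μ (r v) := by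
    unfold probOver
    congr!
  rw [hgoal]
  linarith

lemma IsoToBall.transfer {dI L : ℕ} {H : RootedFeatGraph dI} {V V' : Type} {G : SimpleGraph V}
    {G' : SimpleGraph V'} {x : V → Fin dI → ℝ} {x' : V' → Fin dI → ℝ} {v : V} {v' : V'}
    (h : IsoToBall H G x v L) (ψ : G.induce (ballSet G v L) ≃g G'.induce (ballSet G' v' L))
    (hx : ∀ w, x' (ψ w).1 = x w.1) (hv : ∀ w, w.1 = v → (ψ w).1 = v') :
    IsoToBall H G' x' v' L := by
  obtain ⟨φ, hφ, hr⟩ := h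
  exact ⟨φ.trans ψ, fun w => (hx (φ w)).trans (hφ w), hv _ hr⟩

lemma append_inj {m n : ℕ} {c c' : Fin m → ℝ} {d d' : Fin n → ℝ}
    (h : Fin.append c d = Fin.append c' d') : c = c' ∧ d = d' :=
  ⟨funext fun i => by simpa using congrFun h (Fin.castAdd n i),
    funext fun i => by simpa using congrFun h (Fin.natAdd m i)⟩

/-- Fix `Δ ≥ 2`. For every positive `L` and `δ > 0` there exists `p > 0`
such that: for every finite set `𝒞 ⊂ ℝ^{d_I}`, every set `𝒢` of rooted vertex-featured
graphs with features in `𝒞` and maximum degree at most `Δ`, and every distribution `μ` on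
a finite set `D ⊂ ℝ^{d_r}` with `μ {z} ≤ p` for all `z ∈ D`, there exist GIN parameters
`θ` with one-dimensional output such that for every finite connected simple graph `G`
with maximum degree at most `Δ`, features `x_v ∈ 𝒞`, and every vertex `v`, when labels
are sampled i.i.d. from `μ` and the GIN is run with input features `h_u = (x_u, r_u)`:
(i) if some member of `𝒢` is isomorphic to `(R(G,v,L), v)`, then `z_v > 0.5` with
probability at least `1 − δ`; (ii) if no member of `𝒢` is isomorphic to `(R(G,v,L), v)`,
then `z_v < 0.5` with probability at least `1 − δ`. -/
theorem stmt_14 (Δ : ℕ) (hΔ : 2 ≤ Δ) (L : ℕ) (hL : 0 < L) (δ : ℝ) (hδ : 0 < δ) :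
    ∃ p : ℝ, 0 < p ∧
      ∀ (dI dr : ℕ) (C : Set (Fin dI → ℝ)), C.Finite →
      ∀ 𝒢 : Set (RootedFeatGraph dI),
        (∀ H ∈ 𝒢, (∀ w, H.feat w ∈ C) ∧
          (∀ w, (H.graph.neighborSet w).ncard ≤ Δ)) →
      ∀ (D : Finset (Fin dr → ℝ)) (μ : (Fin dr → ℝ) → ℝ),
        (∀ z, 0 ≤ μ z) → (∑ z ∈ D, μ z = 1) → (∀ z ∈ D, μ z ≤ p) →
      ∃ θ : GINParams (dI + dr) 1,
        ∀ (V : Type) [Fintype V] (G : SimpleGraph V),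
          G.Connected → (∀ w : V, (G.neighborSet w).ncard ≤ Δ) →
          ∀ (x : V → Fin dI → ℝ), (∀ w, x w ∈ C) →
          ∀ v : V,
            ((∃ H ∈ 𝒢, IsoToBall H G x v L) →
              1 - δ ≤ probOver D μ (fun r : V → (Fin dr → ℝ) =>
                0.5 < GINout θ G (fun u => Fin.append (x u) (r u)) v 0)) ∧
            ((¬ ∃ H ∈ 𝒢, IsoToBall H G x v L) →
              1 - δ ≤ probOver D μ (fun r : V → (Fin dr → ℝ) =>
                GINout θ G (fun u => Fin.append (x u) (r u)) v 0 < 0.5)) := by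
  classical
  set N : ℕ := (Δ + 1) ^ (L + 1) with hN
  have hN0 : (0 : ℝ) < (N : ℝ) ^ 2 := by
    have : 0 < N := by positivity
    positivity
  refine ⟨δ / (N : ℝ) ^ 2, by positivity, ?_⟩
  intro dI dr C hC 𝒢 _ D μ h0 h1 hp
  -- The trees seen at some vertex with distinct labels around it whose ball is in `𝒢`.
  let good : Set (TreeT (Fin (dI + dr) → ℝ) (L + 1)) :=
    {T | ∃ (V : Type) (_ : Fintype V) (G : SimpleGraph V) (x : V → Fin dI → ℝ)
      (r : V → Fin dr → ℝ) (v : V), Set.InjOn r (ballSet G v (L + 1)) ∧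
      levelTree G (fun u => Fin.append (x u) (r u)) (L + 1) v = T ∧
      ∃ H ∈ 𝒢, IsoToBall H G x v L}
  obtain ⟨θ, hθ⟩ := gin_universal Δ
    (F := Set.image2 (fun c d => Fin.append c d) C (D : Set (Fin dr → ℝ)))
    (hC.image2 _ D.finite_toSet) L (fun T => if T ∈ good then 1 else 0)
  refine ⟨θ, fun V _ G _ hG x hx v => ?_⟩
  have hout : ∀ r : V → Fin dr → ℝ, (∀ u, r u ∈ D) →
      GINout θ G (fun u => Fin.append (x u) (r u)) v 0 =
        if levelTree G (fun u => Fin.append (x u) (r u)) (L + 1) v ∈ good then 1 else 0 :=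
    fun r hr => hθ V G hG _ (fun u => Set.mem_image2_of_mem (hx u) (hr u)) v
  have inj_append : ∀ {U : Type} (y : U → Fin dI → ℝ) (r : U → Fin dr → ℝ) (B : Set U),
      Set.InjOn r B → Set.InjOn (fun u => Fin.append (y u) (r u)) B :=
    fun y r B hr u hu w hw h => hr hu hw (append_inj h).2
  have hδN : (N : ℝ) ^ 2 * (δ / (N : ℝ) ^ 2) ≤ δ := (mul_div_cancel₀ δ hN0.ne').le
  refine ⟨fun hH => ?_, fun hH => ?_⟩
  · refine le_probOver h0 h1 hp (by positivity) (ballSet_ncard_le hG v (L + 1)) hδN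
      fun r hr hinj => ?_
    rw [hout r hr, if_pos ⟨V, _, G, x, r, v, hinj, rfl, hH⟩]
    norm_num
  · refine le_probOver h0 h1 hp (by positivity) (ballSet_ncard_le hG v (L + 1)) hδN
      fun r hr hinj => ?_
    rw [hout r hr, if_neg]
    · norm_num
    · rintro ⟨V', _, G', x', r', v', hinj', htree, H, hH', hiso⟩
      obtain ⟨ψ, hψ, hψv⟩ := exists_ball_iso htree (inj_append x' r' _ hinj')
        (inj_append x r _ hinj)
      exact hH ⟨H, hH', hiso.transfer ψ (fun w => (append_inj (hψ w)).1) hψv⟩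
end
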